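/- Let R be an associative G-graded algebra over a field F, let V be a graded simple faithful left R-module, let D = End_R^gr(V), and let ψ: R → End_D^gr(V) be the homomorphism of graded algebras with ψ(r)(v) = rv for all r ∈ R, v ∈ V. If R satisfies an ordinary polynomial identity, then V is finite-dimensional as a graded vector space over D; moreover, in that case End_D^gr(V) = End_D(V) and ψ is an isomorphism of graded algebras. -/

import Mathlib

noncomputable section

section Setup

variable (F : Type*) [Field F] {G : Type*} [Group G] [DecidableEq G]
variable {R : Type*} [Ring R] [Algebra F R]
variable {V : Type*} [AddCommGroup V] [Module F V] [Module R V] [IsScalarTower F R V]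
  [SMulCommClass R F V]

/-- `ℛ` is a `G`-grading of the associative `F`-algebra `R`. -/
def IsAlgGrading (ℛ : G → Submodule F R) : Prop :=
  DirectSum.IsInternal ℛ ∧ ∀ (g h : G), ∀ r ∈ ℛ g, ∀ s ∈ ℛ h, r * s ∈ ℛ (g * h)

/-- `𝒱` makes `V` a `G`-graded module over the `G`-graded algebra `(R, ℛ)`. -/
def IsModuleGrading (ℛ : G → Submodule F R) (𝒱 : G → Submodule F V) : Prop :=
  DirectSum.IsInternal 𝒱 ∧ ∀ (g h : G), ∀ r ∈ ℛ g, ∀ x ∈ 𝒱 h, r • x ∈ 𝒱 (g * h)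

/-- `V` is a graded simple `R`-module. -/
def IsGradedSimpleModule (𝒱 : G → Submodule F V) : Prop :=
  (∃ (r : R) (x : V), r • x ≠ 0) ∧
    ∀ W : Submodule R V,
      (W.restrictScalars F = ⨆ g, W.restrictScalars F ⊓ 𝒱 g) → W = ⊥ ∨ W = ⊤

/-- the degree-`h` component of `End_R(V)` (right-degree convention, corresponding to `V` being a
right module over `D`): `R`-linear maps sending `𝒱 g` into `𝒱 (g*h)`. -/
def DGrading (𝒱 : G → Submodule F V) (h : G) : Submodule F (Module.End R V) where
  carrier := {φ | ∀ g : G, ∀ x ∈ 𝒱 g, φ x ∈ 𝒱 (g * h)}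
  add_mem' := fun hf hg g x hx => (𝒱 _).add_mem (hf g x hx) (hg g x hx)
  zero_mem' := fun g x hx => (𝒱 _).zero_mem
  smul_mem' := fun c f hf g x hx => (𝒱 _).smul_mem c (hf g x hx)

/-- `D = End_R^gr(V)`: sums of homogeneous `R`-module endomorphisms of `V`. -/
def Dgr (𝒱 : G → Submodule F V) : Submodule F (Module.End R V) :=
  ⨆ h : G, DGrading F (R := R) 𝒱 h

/-- `End_D(V)`: the `F`-linear endomorphisms of `V` commuting with every element of
`D = End_R^gr(V)`, i.e. the `D`-linear endomorphisms of `V`. -/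
def EndD (𝒱 : G → Submodule F V) : Submodule F (Module.End F V) where
  carrier := {f | ∀ d : Module.End R V, d ∈ Dgr F (R := R) 𝒱 → ∀ x : V, f (d x) = d (f x)}
  add_mem' := by
    intro f g hf hg d hd x
    simp [LinearMap.add_apply, hf d hd x, hg d hd x]
  zero_mem' := by intro d hd x; simp
  smul_mem' := by
    intro c f hf d hd x
    simp [LinearMap.smul_apply, hf d hd x, map_smul]

/-- the degree-`h` component of `End_F(V)` (left-degree convention): maps sending `𝒱 g` into
`𝒱 (h*g)`. -/
def endVGrading (𝒱 : G → Submodule F V) (h : G) : Submodule F (Module.End F V) where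
  carrier := {φ | ∀ g : G, ∀ x ∈ 𝒱 g, φ x ∈ 𝒱 (h * g)}
  add_mem' := fun hf hg g x hx => (𝒱 _).add_mem (hf g x hx) (hg g x hx)
  zero_mem' := fun g x hx => (𝒱 _).zero_mem
  smul_mem' := fun c f hf g x hx => (𝒱 _).smul_mem c (hf g x hx)

/-- `R` satisfies an ordinary polynomial identity. -/
def SatisfiesPI : Prop :=
  ∃ f : FreeAlgebra F ℕ, f ≠ 0 ∧ ∀ v : ℕ → R, FreeAlgebra.lift F v f = 0

end Setup

/-!
Write `Ann v` for the left ideal annihilating a finite family `v` of homogeneous vectors. It is a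
graded left ideal, so by graded simplicity `Ann v • x` is `0` or `V` for every homogeneous `x`. If
`Ann v • x = V`, then the values of ring elements at `x` can be prescribed independently of those
at `v`; if `Ann v • x = 0`, then an induction on the length of `v`, which produces homogeneous
elements of `D` as the maps `r • y ↦ r • x`, shows `x ∈ D v`. Hence a family whose values can be
prescribed arbitrarily (an interpolating family) and which is maximal as such spans `V` over `D`,
and every `D`-linear map agrees with some `r : R` on it, hence everywhere. Such a maximal family
exists because a polynomial identity bounds the length of interpolating families: if `N` is the
length of a word occurring in the identity and `v` has `N + 1` members, the ring elements that
shift `v` along that word detect its coefficient.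
-/

open DirectSum SetLike

section Interpolation

variable {ι R V : Type*} [Ring R] [AddCommGroup V] [Module R V]

/-- The left ideal of the elements of `R` that annihilate every member of the family `v`. -/
def familyAnnihilator (R : Type*) [Ring R] [Module R V] (v : ι → V) : Submodule R R :=
  ⨅ i, Ideal.torsionOf R V (v i)

theorem mem_familyAnnihilator {v : ι → V} {r : R} :
    r ∈ familyAnnihilator R v ↔ ∀ i, r • v i = 0 := by
  simp only [familyAnnihilator, Submodule.mem_iInf, Ideal.mem_torsionOf_iff]

theorem mem_familyAnnihilator_fin_succ {n : ℕ} {v : Fin (n + 1) → V} {r : R} :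
    r ∈ familyAnnihilator R v ↔ r • v 0 = 0 ∧ r ∈ familyAnnihilator R (Fin.tail v) := by
  simp only [mem_familyAnnihilator, Fin.forall_fin_succ, Fin.tail]

/-- The family `v` is interpolating for `R` if elements of `R` can send its members to arbitrary
prescribed vectors. For a homogeneous family in a graded simple module this plays the role of
linear independence over the graded division algebra of endomorphisms. -/
def Interpolates (R : Type*) [Ring R] [Module R V] (v : ι → V) : Prop :=
  ∀ w : ι → V, ∃ r : R, ∀ i, r • v i = w i

theorem Interpolates.ne_zero [Nontrivial V] {v : ι → V} (hv : Interpolates R v) (i : ι) :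
    v i ≠ 0 := by
  intro hvi
  obtain ⟨y, hy⟩ := exists_ne (0 : V)
  obtain ⟨r, hr⟩ := hv fun _ => y
  exact hy (by rw [← hr i, hvi, smul_zero])

theorem Interpolates.cons {n : ℕ} {v : Fin n → V} (hv : Interpolates R v) {x : V}
    (hx : (familyAnnihilator R v).map (LinearMap.toSpanSingleton R V x) = ⊤) :
    Interpolates R (Fin.cons x v : Fin (n + 1) → V) := by
  intro w
  obtain ⟨r, hr⟩ := hv (Fin.tail w)
  obtain ⟨s, hs, hsx⟩ : w 0 - r • x ∈
      (familyAnnihilator R v).map (LinearMap.toSpanSingleton R V x) := hx ▸ Submodule.mem_top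
  rw [LinearMap.toSpanSingleton_apply] at hsx
  refine ⟨r + s, Fin.cases ?_ fun i => ?_⟩
  · rw [Fin.cons_zero, add_smul, hsx, add_sub_cancel]
  · rw [Fin.cons_succ, add_smul, hr i, mem_familyAnnihilator.1 hs i, add_zero, Fin.tail]

theorem exists_end_apply_smul_eq_smul {I : Submodule R R} {y x : V}
    (hy : I.map (LinearMap.toSpanSingleton R V y) = ⊤) (hyx : ∀ r ∈ I, r • y = 0 → r • x = 0) :
    ∃ φ : Module.End R V, ∀ r ∈ I, φ (r • y) = r • x := by
  let evalY : I →ₗ[R] V := (LinearMap.toSpanSingleton R V y).domRestrict I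
  let evalX : I →ₗ[R] V := (LinearMap.toSpanSingleton R V x).domRestrict I
  have hsurj : Function.Surjective evalY := by
    rwa [← LinearMap.range_eq_top, LinearMap.range_domRestrict]
  have hker : evalY.ker ≤ evalX.ker := fun r hr => hyx r r.2 hr
  refine ⟨evalY.ker.liftQ evalX hker ∘ₗ (evalY.quotKerEquivOfSurjective hsurj).symm,
    fun r hr => ?_⟩
  have hmk := evalY.quotKerEquivOfSurjective_symm_apply hsurj ⟨r, hr⟩
  exact (congrArg (evalY.ker.liftQ evalX hker) hmk).trans (Submodule.liftQ_apply ..)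

end Interpolation

section PolynomialIdentity

theorem freeAlgebra_lift_basisFreeMonoid {F X A : Type*} [CommSemiring F] [Semiring A]
    [Algebra F A] (r : X → A) (m : FreeMonoid X) :
    FreeAlgebra.lift F r (FreeAlgebra.basisFreeMonoid F X m) = (m.toList.map r).prod := by
  simp [FreeAlgebra.basisFreeMonoid, FreeAlgebra.equivMonoidAlgebraFreeMonoid,
    FreeMonoid.lift_apply, map_list_prod, Function.comp_def]

variable {R V : Type*} [Ring R] [AddCommGroup V] [Module R V]

/-- Elements of `R` acting on `v₀, …, v_N` as the shifts along a word: the letter `k` sends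
`v_{j+1}` to `v_j` if the `j`-th letter of the word is `k`, and to `0` otherwise. -/
structure IsWordShift {X : Type*} [DecidableEq X] (word : List X) (v : Fin (word.length + 1) → V)
    (r : X → R) : Prop where
  smul_zero : ∀ k, r k • v 0 = 0
  smul_succ : ∀ k j, r k • v (Fin.succ j) = if word[(j : ℕ)] = k then v j.castSucc else 0

theorem Interpolates.exists_isWordShift {X : Type*} [DecidableEq X] {word : List X}
    {v : Fin (word.length + 1) → V} (hv : Interpolates R v) :
    ∃ r : X → R, IsWordShift word v r := by
  choose r hr using fun k => hv (Fin.cons 0 fun j => if word[(j : ℕ)] = k then v j.castSucc else 0)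
  exact ⟨r, fun k => hr k 0, fun k j => hr k j.succ⟩

theorem IsWordShift.smul_prod_smul {X : Type*} [DecidableEq X] {word : List X}
    {v : Fin (word.length + 1) → V} {r : X → R} (hr : IsWordShift word v r) {s : R}
    (hs : ∀ j, s • v j = (Pi.single 0 (v 0) : Fin (word.length + 1) → V) j) (l : List X)
    (j : Fin (word.length + 1)) :
    s • (l.map r).prod • v j = if l = word.take j then v 0 else 0 := by
  induction l using List.reverseRecOn generalizing j with
  | nil =>
    rw [List.map_nil, List.prod_nil, one_smul, hs]
    cases j using Fin.cases with
    | zero => simp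
    | succ j =>
      have : word ≠ [] := List.ne_nil_of_length_pos j.pos
      simp [this]
  | append_singleton l k ih =>
    rw [List.map_append, List.prod_append, List.map_singleton, List.prod_singleton, mul_smul]
    cases j using Fin.cases with
    | zero => simp [hr.smul_zero]
    | succ j =>
      have htake : word.take j.succ = word.take j ++ [word[(j : ℕ)]] := by simp
      simp only [hr.smul_succ, htake, List.append_singleton_inj]
      by_cases hk : word[(j : ℕ)] = k
      · simp [hk, ih]
      · simp [hk, Ne.symm hk]

theorem exists_forall_not_interpolates_of_identity {F X : Type*} [Field F] [Algebra F R]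
    [Module F V] [IsScalarTower F R V] [Nontrivial V] {f : FreeAlgebra F X} (hf : f ≠ 0)
    (hid : ∀ r : X → R, FreeAlgebra.lift F r f = 0) :
    ∃ N : ℕ, ∀ v : Fin (N + 1) → V, ¬ Interpolates R v := by
  classical
  let B := FreeAlgebra.basisFreeMonoid F X
  obtain ⟨m, hm⟩ : ∃ m, B.repr f m ≠ 0 := Finsupp.ne_iff.1 (B.repr.map_ne_zero_iff.2 hf)
  refine ⟨m.toList.length, fun v hv => hm ?_⟩
  obtain ⟨r, hr⟩ := hv.exists_isWordShift
  obtain ⟨s, hs⟩ := hv (Pi.single 0 (v 0))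
  have hword (m' : FreeMonoid X) :
      s • (m'.toList.map r).prod • v (Fin.last _) = if m' = m then v 0 else 0 := by
    simpa using hr.smul_prod_smul hs m'.toList (Fin.last _)
  have hlift (m' : FreeMonoid X) : FreeAlgebra.lift F r (B m') = (m'.toList.map r).prod :=
    freeAlgebra_lift_basisFreeMonoid r m'
  have hcoeff : s • FreeAlgebra.lift F r f • v (Fin.last _) = B.repr f m • v 0 := by
    conv_lhs => rw [← B.linearCombination_repr f]
    simp [Finsupp.linearCombination_apply, Finsupp.sum, hlift, Finset.sum_smul, Finset.smul_sum,
      smul_comm s, hword, hm]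
  rw [hid, zero_smul, smul_zero] at hcoeff
  exact (smul_eq_zero.1 hcoeff.symm).resolve_right (hv.ne_zero 0)

end PolynomialIdentity

section Homogeneous

variable {F : Type*} [Field F] {G : Type*} [DecidableEq G]
variable {R : Type*} [Ring R] [Algebra F R] {V : Type*} [AddCommGroup V] [Module F V] [Module R V]
variable {ℛ : G → Submodule F R} {𝒱 : G → Submodule F V}

theorem restrictScalars_eq_iSup_inf [Decomposition 𝒱] [IsScalarTower F R V] {W : Submodule R V}
    (hW : W.IsHomogeneous 𝒱) : W.restrictScalars F = ⨆ g, W.restrictScalars F ⊓ 𝒱 g := by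
  classical
  refine le_antisymm (fun x hx => ?_) (iSup_le fun g => inf_le_left)
  rw [← sum_support_decompose 𝒱 x]
  exact Submodule.sum_mem _ fun g _ => Submodule.mem_iSup_of_mem g ⟨hW g hx, coe_mem _⟩

variable [Group G] [Decomposition ℛ] [Decomposition 𝒱]

theorem decompose_smul_of_mem
    (hsmul : ∀ (g h : G), ∀ r ∈ ℛ g, ∀ x ∈ 𝒱 h, r • x ∈ 𝒱 (g * h))
    {h : G} {x : V} (hx : x ∈ 𝒱 h) (r : R) (g : G) :
    (decompose 𝒱 (r • x) (g * h) : V) = (decompose ℛ r g : R) • x := by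
  induction r using Decomposition.inductionOn ℛ with
  | zero => simp
  | @homogeneous k r =>
    have hrx : (r : R) • x ∈ 𝒱 (k * h) := hsmul k h r r.2 x hx
    obtain rfl | hkg := eq_or_ne k g
    · rw [decompose_of_mem_same 𝒱 hrx, decompose_of_mem_same ℛ r.2]
    · rw [decompose_of_mem_ne 𝒱 hrx (mt mul_right_cancel hkg), decompose_of_mem_ne ℛ r.2 hkg,
        zero_smul]
  | add r s hr hs => simp [add_smul, hr, hs]

theorem familyAnnihilator_isHomogeneous
    (hsmul : ∀ (g h : G), ∀ r ∈ ℛ g, ∀ x ∈ 𝒱 h, r • x ∈ 𝒱 (g * h))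
    {ι : Type*} {v : ι → V} (hv : ∀ i, IsHomogeneousElem 𝒱 (v i)) :
    (familyAnnihilator R v).IsHomogeneous ℛ := by
  intro g r hr
  refine mem_familyAnnihilator.2 fun i => ?_
  obtain ⟨h, hvi⟩ := hv i
  rw [← decompose_smul_of_mem hsmul hvi, mem_familyAnnihilator.1 hr i]
  simp

theorem map_toSpanSingleton_isHomogeneous
    (hsmul : ∀ (g h : G), ∀ r ∈ ℛ g, ∀ x ∈ 𝒱 h, r • x ∈ 𝒱 (g * h))
    {I : Submodule R R} (hI : I.IsHomogeneous ℛ) {x : V} (hx : IsHomogeneousElem 𝒱 x) :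
    (I.map (LinearMap.toSpanSingleton R V x)).IsHomogeneous 𝒱 := by
  obtain ⟨h, hx⟩ := hx
  rintro g _ ⟨r, hr, rfl⟩
  refine ⟨decompose ℛ r (g * h⁻¹), hI _ hr, ?_⟩
  rw [LinearMap.toSpanSingleton_apply, LinearMap.toSpanSingleton_apply,
    ← decompose_smul_of_mem hsmul hx, inv_mul_cancel_right]

theorem IsGradedSimpleModule.map_toSpanSingleton_eq_top [IsScalarTower F R V]
    (hsimple : IsGradedSimpleModule F (R := R) 𝒱)
    (hsmul : ∀ (g h : G), ∀ r ∈ ℛ g, ∀ x ∈ 𝒱 h, r • x ∈ 𝒱 (g * h))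
    {I : Submodule R R} (hI : I.IsHomogeneous ℛ) {x : V} (hx : IsHomogeneousElem 𝒱 x)
    (hIx : ∃ r ∈ I, r • x ≠ 0) :
    I.map (LinearMap.toSpanSingleton R V x) = ⊤ := by
  refine (hsimple.2 _ (restrictScalars_eq_iSup_inf
    (map_toSpanSingleton_isHomogeneous hsmul hI hx))).resolve_left fun hbot => ?_
  obtain ⟨r, hr, hrx⟩ := hIx
  exact hrx ((Submodule.mem_bot R).1 (hbot ▸ Submodule.mem_map_of_mem hr))

end Homogeneous

section GradedEndSpan

variable {F : Type*} [Field F] {G : Type*} [Group G] {ι R : Type*} [Ring R]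
variable {V : Type*} [AddCommGroup V] [Module F V] [Module R V] [SMulCommClass R F V]
variable {𝒱 : G → Submodule F V}

/-- The `D`-span of the family `v`, where `D = Dgr F 𝒱` is the algebra of graded endomorphisms. -/
def gradedEndSpan (R : Type*) [Ring R] [Module R V] [SMulCommClass R F V]
    (𝒱 : G → Submodule F V) (v : ι → V) : Submodule F V :=
  ⨆ i, (Dgr F (R := R) 𝒱).map (LinearMap.applyₗ' F (v i))

theorem apply_mem_gradedEndSpan {v : ι → V} {d : Module.End R V}
    (hd : d ∈ Dgr F (R := R) 𝒱) (i : ι) : d (v i) ∈ gradedEndSpan R 𝒱 v :=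
  Submodule.mem_iSup_of_mem i (Submodule.mem_map_of_mem (f := LinearMap.applyₗ' F (v i)) hd)

theorem gradedEndSpan_tail_le {n : ℕ} (v : Fin (n + 1) → V) :
    gradedEndSpan R 𝒱 (Fin.tail v) ≤ gradedEndSpan R 𝒱 v :=
  iSup_le fun i => le_iSup (fun j => (Dgr F (R := R) 𝒱).map (LinearMap.applyₗ' F (v j))) i.succ

theorem exists_eq_sum_of_mem_gradedEndSpan [Fintype ι] {v : ι → V} {w : V}
    (hw : w ∈ gradedEndSpan R 𝒱 v) :
    ∃ d : ι → Module.End R V, (∀ i, d i ∈ Dgr F (R := R) 𝒱) ∧ w = ∑ i, d i (v i) := by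
  obtain ⟨u, hu, rfl⟩ := (Submodule.mem_iSup_iff_exists_finsupp _ w).1 hw
  choose d hd hdu using hu
  refine ⟨d, hd, ?_⟩
  rw [Finsupp.sum_fintype _ _ fun _ => rfl]
  exact Finset.sum_congr rfl fun i _ => (hdu i).symm

end GradedEndSpan

theorem IsGradedSimpleModule.nontrivial {F : Type*} [Field F] {G : Type*}
    {R : Type*} [Ring R] [Algebra F R]
    {V : Type*} [AddCommGroup V] [Module F V] [Module R V] [IsScalarTower F R V]
    {𝒱 : G → Submodule F V} (hsimple : IsGradedSimpleModule F (R := R) 𝒱) : Nontrivial V :=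
  let ⟨_, _, hrx⟩ := hsimple.1
  ⟨⟨_, _, hrx⟩⟩

section GradedDensity

variable {F : Type*} [Field F] {G : Type*} [Group G] [DecidableEq G]
variable {R : Type*} [Ring R] [Algebra F R]
variable {V : Type*} [AddCommGroup V] [Module F V] [Module R V] [SMulCommClass R F V]
variable {ℛ : G → Submodule F R} {𝒱 : G → Submodule F V}

theorem mem_dGrading_of_apply_smul_eq_smul [Decomposition ℛ] [Decomposition 𝒱]
    (hsmul : ∀ (g h : G), ∀ r ∈ ℛ g, ∀ x ∈ 𝒱 h, r • x ∈ 𝒱 (g * h)) {I : Submodule R R}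
    (hI : I.IsHomogeneous ℛ) {k h : G} {y x : V} (hyk : y ∈ 𝒱 k) (hxh : x ∈ 𝒱 h)
    (hy : I.map (LinearMap.toSpanSingleton R V y) = ⊤) {φ : Module.End R V}
    (hφ : ∀ r ∈ I, φ (r • y) = r • x) : φ ∈ DGrading F (R := R) 𝒱 (k⁻¹ * h) := by
  intro g z hz
  obtain ⟨r, hr, rfl⟩ : z ∈ I.map (LinearMap.toSpanSingleton R V y) := hy ▸ Submodule.mem_top
  rw [LinearMap.toSpanSingleton_apply] at hz ⊢
  have hcomponent : r • y = (decompose ℛ r (g * k⁻¹) : R) • y := by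
    rw [← decompose_smul_of_mem hsmul hyk, inv_mul_cancel_right, decompose_of_mem_same 𝒱 hz]
  rw [hcomponent, hφ _ (hI _ hr), ← mul_assoc]
  exact hsmul _ _ _ (coe_mem _) _ hxh

theorem IsGradedSimpleModule.mem_gradedEndSpan_of_forall_smul_eq_zero [IsScalarTower F R V]
    [Decomposition ℛ] [Decomposition 𝒱] (hsimple : IsGradedSimpleModule F (R := R) 𝒱)
    (hsmul : ∀ (g h : G), ∀ r ∈ ℛ g, ∀ x ∈ 𝒱 h, r • x ∈ 𝒱 (g * h)) {n : ℕ} {v : Fin n → V}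
    (hv : ∀ i, IsHomogeneousElem 𝒱 (v i)) {x : V} (hx : IsHomogeneousElem 𝒱 x)
    (hann : ∀ r ∈ familyAnnihilator R v, r • x = 0) : x ∈ gradedEndSpan R 𝒱 v := by
  induction n generalizing x with
  | zero =>
    have hx0 : (1 : R) • x = 0 := hann 1 (mem_familyAnnihilator.2 finZeroElim)
    rw [one_smul] at hx0
    exact hx0 ▸ Submodule.zero_mem _
  | succ n ih =>
    have hvtail : ∀ i, IsHomogeneousElem 𝒱 (Fin.tail v i) := fun i => hv i.succ
    have hann' : ∀ r ∈ familyAnnihilator R (Fin.tail v), r • v 0 = 0 → r • x = 0 :=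
      fun r hr hr0 => hann r (mem_familyAnnihilator_fin_succ.2 ⟨hr0, hr⟩)
    by_cases hv0 : ∃ r ∈ familyAnnihilator R (Fin.tail v), r • v 0 ≠ 0
    · have hI := familyAnnihilator_isHomogeneous hsmul hvtail
      have htop := hsimple.map_toSpanSingleton_eq_top hsmul hI (hv 0) hv0
      obtain ⟨φ, hφ⟩ := exists_end_apply_smul_eq_smul htop hann'
      obtain ⟨k, hk⟩ := hv 0
      obtain ⟨h, hh⟩ := hx
      have hφdeg := mem_dGrading_of_apply_smul_eq_smul hsmul hI hk hh htop hφ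
      have hφv : φ (v 0) ∈ 𝒱 h := mul_inv_cancel_left k h ▸ hφdeg k _ hk
      have hrest : x - φ (v 0) ∈ gradedEndSpan R 𝒱 (Fin.tail v) :=
        ih hvtail ⟨h, Submodule.sub_mem _ hh hφv⟩ fun r hr => by
          rw [smul_sub, ← map_smul, hφ r hr, sub_self]
      rw [← sub_add_cancel x (φ (v 0))]
      exact Submodule.add_mem _ (gradedEndSpan_tail_le v hrest)
        (apply_mem_gradedEndSpan (Submodule.mem_iSup_of_mem _ hφdeg) 0)
    · push Not at hv0
      exact gradedEndSpan_tail_le v (ih hvtail hx fun r hr => hann' r hr (hv0 r hr))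

theorem IsGradedSimpleModule.exists_interpolates_gradedEndSpan_eq_top [IsScalarTower F R V]
    [Decomposition ℛ] [Decomposition 𝒱] (hsimple : IsGradedSimpleModule F (R := R) 𝒱)
    (hsmul : ∀ (g h : G), ∀ r ∈ ℛ g, ∀ x ∈ 𝒱 h, r • x ∈ 𝒱 (g * h))
    (hbound : ∃ N : ℕ, ∀ v : Fin (N + 1) → V, ¬ Interpolates R v) :
    ∃ (n : ℕ) (v : Fin n → V), Interpolates R v ∧ gradedEndSpan R 𝒱 v = ⊤ := by
  let HasInterpolating (n : ℕ) : Prop :=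
    ∃ v : Fin n → V, (∀ i, IsHomogeneousElem 𝒱 (v i)) ∧ Interpolates R v
  have hzero : HasInterpolating 0 := ⟨finZeroElim, finZeroElim, fun _ => ⟨0, finZeroElim⟩⟩
  obtain ⟨N, hN⟩ := hbound
  obtain ⟨n, hn, hmax⟩ := Nat.exists_not_and_succ_of_not_zero_of_exists
    (p := fun n => ¬ HasInterpolating n) (not_not_intro hzero) ⟨N + 1, fun ⟨v, _, hv⟩ => hN v hv⟩
  obtain ⟨v, hvhom, hv⟩ := not_not.1 hn
  have hann : ∀ x, IsHomogeneousElem 𝒱 x → ∀ r ∈ familyAnnihilator R v, r • x = 0 := by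
    intro x hx r hr
    by_contra hrx
    have hI := familyAnnihilator_isHomogeneous hsmul hvhom
    exact hmax ⟨Fin.cons x v, Fin.cases hx hvhom,
      hv.cons (hsimple.map_toSpanSingleton_eq_top hsmul hI hx ⟨r, hr, hrx⟩)⟩
  refine ⟨n, v, hv, top_unique ?_⟩
  rw [← (Decomposition.isInternal 𝒱).submodule_iSup_eq_top]
  exact iSup_le fun g x hx =>
    hsimple.mem_gradedEndSpan_of_forall_smul_eq_zero hsmul hvhom ⟨g, hx⟩ (hann x ⟨g, hx⟩)

end GradedDensity

section DLinearEndomorphisms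

variable {F : Type*} [Field F] {G : Type*} [Group G] {R : Type*} [Ring R] [Algebra F R]
variable {V : Type*} [AddCommGroup V] [Module F V] [Module R V] [IsScalarTower F R V]
  [SMulCommClass R F V]
variable {ℛ : G → Submodule F R} {𝒱 : G → Submodule F V}

theorem mem_endD_iff_exists_toModuleEnd {ι : Type*} {v : ι → V} (hv : Interpolates R v)
    (hspan : gradedEndSpan R 𝒱 v = ⊤) (f : Module.End F V) :
    f ∈ EndD F (R := R) 𝒱 ↔ ∃ r : R, Module.toModuleEnd F V r = f := by
  refine ⟨fun hf => ?_, ?_⟩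
  · obtain ⟨r, hr⟩ := hv fun i => f (v i)
    refine ⟨r, LinearMap.eqLocus_eq_top.1 (top_unique (hspan ▸ iSup_le fun i => ?_))⟩
    rintro _ ⟨d, hd, rfl⟩
    calc r • d (v i) = d (r • v i) := (map_smul d r _).symm
      _ = d (f (v i)) := by rw [hr i]
      _ = f (d (v i)) := (hf d hd _).symm
  · rintro ⟨r, rfl⟩ d _ x
    exact (map_smul d r x).symm

theorem endD_eq_iSup_inf_endVGrading (hR : ⨆ g, ℛ g = ⊤)
    (hsurj : ∀ f : Module.End F V,
      f ∈ EndD F (R := R) 𝒱 ↔ ∃ r : R, Module.toModuleEnd F V r = f)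
    (hgraded : ∀ g, ∀ r ∈ ℛ g, (Module.toModuleEnd F V r : Module.End F V) ∈ endVGrading F 𝒱 g) :
    EndD F (R := R) 𝒱 = ⨆ h : G, EndD F (R := R) 𝒱 ⊓ endVGrading F 𝒱 h := by
  refine le_antisymm (fun f hf => ?_) (iSup_le fun h => inf_le_left)
  obtain ⟨r, rfl⟩ := (hsurj f).1 hf
  have hr : r ∈ ⨆ g, ℛ g := hR ▸ Submodule.mem_top
  induction hr using Submodule.iSup_induction' with
  | mem g r hr => exact Submodule.mem_iSup_of_mem g ⟨hf, hgraded g r hr⟩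
  | zero => rw [map_zero]; exact Submodule.zero_mem _
  | add r s _ _ hr hs =>
    rw [map_add]
    exact Submodule.add_mem _ (hr ((hsurj _).2 ⟨r, rfl⟩)) (hs ((hsurj _).2 ⟨s, rfl⟩))

end DLinearEndomorphisms

/-- Let `R` be an associative `G`-graded `F`-algebra, `V` a graded simple faithful left
`R`-module, `D = End_R^gr(V)` and `ψ : R → End_D^gr(V)`, `ψ(r)(v) = r • v`.  If `R` satisfies an
ordinary polynomial identity then `V` is a finite-dimensional graded vector space over `D`;
moreover `End_D^gr(V) = End_D(V)` and `ψ` is an isomorphism of graded algebras onto `End_D(V)`. -/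
theorem findim_over_D_of_PI
    {F : Type*} [Field F] {G : Type*} [Group G] [DecidableEq G]
    {R : Type*} [Ring R] [Algebra F R]
    {V : Type*} [AddCommGroup V] [Module F V] [Module R V] [IsScalarTower F R V]
    [SMulCommClass R F V]
    (ℛ : G → Submodule F R) (𝒱 : G → Submodule F V)
    (hR : IsAlgGrading F ℛ) (hV : IsModuleGrading F ℛ 𝒱)
    (hsimple : IsGradedSimpleModule F (R := R) 𝒱)
    (hfaithful : ∀ r : R, (∀ x : V, r • x = 0) → r = 0)
    (hPI : SatisfiesPI F (R := R)) :
    -- `V` is finite-dimensional over `D`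
    (∃ (n : ℕ) (b : Fin n → V), ∀ w : V, ∃ d : Fin n → Module.End R V,
        (∀ i, d i ∈ Dgr F (R := R) 𝒱) ∧ w = ∑ i, d i (b i)) ∧
    -- `End_D^gr(V) = End_D(V)`
    (EndD F (R := R) 𝒱 = ⨆ h : G, EndD F (R := R) 𝒱 ⊓ endVGrading F 𝒱 h) ∧
    -- `ψ` is injective,
    (Function.Injective (Module.toModuleEnd F V : R →+* Module.End F V)) ∧
    -- surjective onto `End_D(V)`,
    (∀ f : Module.End F V,
        f ∈ EndD F (R := R) 𝒱 ↔ ∃ r : R, Module.toModuleEnd F V r = f) ∧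
    -- and graded
    (∀ g : G, ∀ r ∈ ℛ g, (Module.toModuleEnd F V r : Module.End F V) ∈ endVGrading F 𝒱 g) := by
  let := hR.1.chooseDecomposition
  let := hV.1.chooseDecomposition
  have := hsimple.nontrivial
  obtain ⟨f, hf, hid⟩ := hPI
  obtain ⟨n, v, hv, hspan⟩ := hsimple.exists_interpolates_gradedEndSpan_eq_top hV.2
    (exists_forall_not_interpolates_of_identity hf hid)
  have hsurj := mem_endD_iff_exists_toModuleEnd hv hspan
  have hgraded : ∀ g, ∀ r ∈ ℛ g,
      (Module.toModuleEnd F V r : Module.End F V) ∈ endVGrading F 𝒱 g :=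
    fun g r hr h x hx => hV.2 g h r hr x hx
  have hinj : Function.Injective (Module.toModuleEnd F V : R →+* Module.End F V) :=
    (injective_iff_map_eq_zero _).2 fun r hr => hfaithful r (LinearMap.congr_fun hr)
  exact ⟨⟨n, v, fun w => exists_eq_sum_of_mem_gradedEndSpan (hspan ▸ Submodule.mem_top)⟩,
    endD_eq_iSup_inf_endVGrading hR.1.submodule_iSup_eq_top hsurj hgraded, hinj, hsurj, hgraded⟩
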